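/- The operator Υ satisfies (A₁A₀ ⊗ A₁^{−1}) ∘ Υ = q^{−1} · Υ ∘ (A₁ ⊗ A₀) in End(ℂ^N ⊗ ℂ^N). -/

import Mathlib

open Finset Kronecker

/-- `A₀ e_k = q^{2k} e_k` on `ℂ^N` (basis indexed by `ZMod N`). -/
noncomputable def A0 (N : ℕ) (q : ℂ) : Matrix (ZMod N) (ZMod N) ℂ :=
  Matrix.diagonal fun k => q ^ (2 * k.val)

/-- `A₁ e_k = e_{k+1}`. -/
noncomputable def A1 (N : ℕ) : Matrix (ZMod N) (ZMod N) ℂ :=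
  fun j k => if j = k + 1 then 1 else 0

/-- `A₂ e_k = q^{1−2k} e_{k−1}`. -/
noncomputable def A2 (N : ℕ) (q : ℂ) : Matrix (ZMod N) (ZMod N) ℂ :=
  fun j k => if j = k - 1 then q ^ ((1 : ℤ) - 2 * (k.val : ℤ)) else 0

/-- `Υ := (1/N) Σ_{i,j=0}^{N−1} q^{−2ij−j} A₀^i ⊗ (A₁A₀)^{−j}` on `ℂ^N ⊗ ℂ^N`. -/
noncomputable def Ups (N : ℕ) [NeZero N] (q : ℂ) :
    Matrix (ZMod N × ZMod N) (ZMod N × ZMod N) ℂ :=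
  (N : ℂ)⁻¹ • ∑ i ∈ Finset.range N, ∑ j ∈ Finset.range N,
    (q ^ (-(2 * (i : ℤ) * (j : ℤ) + (j : ℤ)))) • ((A0 N q ^ i) ⊗ₖ ((A1 N * A0 N q)⁻¹ ^ j))

/-!
Put `x = A₀ ⊗ 1`, `y = 1 ⊗ (A₁A₀)⁻¹`, `p = A₁A₀ ⊗ A₁⁻¹` and `r = A₁ ⊗ A₀`, so that `Υ` is the
average of the terms `t i j = q ^ (-(2ij + j)) x ^ i y ^ j`. Since `A₀A₁ = q² A₁A₀`, the commuting
elements `x` and `y` satisfy `x p = q² p x`, `y p = q² p y` and `x y r = q⁴ p`. Moving `p` to the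
right through `x ^ i y ^ j` therefore gives `p * t i j = q⁻¹ t (i + 1) (j + 1) * r`, and as `t` is
`N`-periodic in `i` and in `j`, the shift disappears after summation.
-/

/-- `a` and `b` commute up to the scalar `s`, i.e. they satisfy the quantum plane (or Weyl)
relation `a b = s b a`. The factor is attached to moving `a` to the right past `b`. -/
def QCommute {K R : Type*} [Mul R] [SMul K R] (s : K) (a b : R) : Prop :=
  a * b = s • (b * a)

namespace QCommute

variable {K R : Type*} [CommSemiring K] [Semiring R] [Algebra K R] {s : K} {a b : R}

theorem pow_left (h : QCommute s a b) (n : ℕ) : QCommute (s ^ n) (a ^ n) b := by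
  unfold QCommute at h ⊢
  induction n with
  | zero => simp
  | succ n ih =>
    calc a ^ (n + 1) * b = a ^ n * (a * b) := by rw [pow_succ, mul_assoc]
      _ = s • (a ^ n * b * a) := by rw [h, mul_smul_comm, mul_assoc]
      _ = s ^ (n + 1) • (b * a ^ (n + 1)) := by
        rw [ih, smul_mul_assoc, smul_smul, ← pow_succ', mul_assoc, ← pow_succ]

theorem mul_left_self (h : QCommute s a b) : QCommute s (b * a) b := by
  unfold QCommute at h ⊢
  rw [mul_assoc, h, mul_smul_comm]

theorem mul_right_self (h : QCommute s a b) : QCommute s a (b * a) := by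
  unfold QCommute at h ⊢
  rw [← mul_assoc, h, smul_mul_assoc]

theorem units_inv_left {u : Rˣ} (h : QCommute s a u) : QCommute s (↑u⁻¹ : R) a := by
  unfold QCommute at h ⊢
  calc ↑u⁻¹ * a = ↑u⁻¹ * (a * u) * ↑u⁻¹ := by simp only [mul_assoc, Units.mul_inv, mul_one]
    _ = s • (a * ↑u⁻¹) := by
      rw [h, mul_smul_comm, smul_mul_assoc, Units.inv_mul_cancel_left]

theorem units_inv_mul_right {u v : Rˣ} (h : QCommute s (u : R) v) :
    (↑(v * u)⁻¹ * u : R) = s • (↑v⁻¹ : R) := by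
  have hinv : (↑v⁻¹ * u : R) = s • (u * ↑v⁻¹ : R) := h.units_inv_left
  rw [mul_inv_rev, Units.val_mul, mul_assoc, hinv, mul_smul_comm,
    Units.inv_mul_cancel_left]

theorem mul_pow (h : QCommute s a b) (n : ℕ) :
    (b * a) ^ n = s ^ n.choose 2 • (b ^ n * a ^ n) := by
  induction n with
  | zero => simp
  | succ n ih =>
    have hchoose : (n + 1).choose 2 = n.choose 2 + n := by
      rw [Nat.choose_succ_succ', Nat.choose_one_right, add_comm]
    calc (b * a) ^ (n + 1) = s ^ n.choose 2 • (b ^ n * (a ^ n * b) * a) := by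
          rw [pow_succ, ih, smul_mul_assoc]; simp only [mul_assoc]
      _ = s ^ (n + 1).choose 2 • (b ^ (n + 1) * a ^ (n + 1)) := by
          rw [h.pow_left n, mul_smul_comm, smul_mul_assoc, smul_smul, ← pow_add, hchoose,
            pow_succ b, pow_succ a]
          simp only [mul_assoc]

theorem mul_pow_eq_one {q : K} {N : ℕ} (h : QCommute (q ^ 2) a b) (hq : q ^ N = 1)
    (ha : a ^ N = 1) (hb : b ^ N = 1) : (b * a) ^ N = 1 := by
  rw [h.mul_pow, ha, hb, mul_one, ← pow_mul, Nat.choose_two_right,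
    Nat.two_mul_div_two_of_even (Nat.even_mul_pred_self N), pow_mul, hq, one_pow, one_smul]

section Kronecker

variable {m n : Type*} [Fintype m] [Fintype n]

theorem kronecker_of_commute_right {A C : Matrix m m K} {B D : Matrix n n K} (hAC : QCommute s A C)
    (hBD : Commute B D) : QCommute s (A ⊗ₖ B) (C ⊗ₖ D) := by
  unfold QCommute at hAC ⊢
  rw [← Matrix.mul_kronecker_mul, ← Matrix.mul_kronecker_mul, hAC, hBD.eq, Matrix.smul_kronecker]

theorem kronecker_of_commute_left {A C : Matrix m m K} {B D : Matrix n n K} (hAC : Commute A C)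
    (hBD : QCommute s B D) : QCommute s (A ⊗ₖ B) (C ⊗ₖ D) := by
  unfold QCommute at hBD ⊢
  rw [← Matrix.mul_kronecker_mul, ← Matrix.mul_kronecker_mul, hAC.eq, hBD, Matrix.kronecker_smul]

end Kronecker

end QCommute

section Kronecker

variable {K m n : Type*} [CommSemiring K] [Fintype m] [Fintype n]

theorem commute_kronecker {A C : Matrix m m K} {B D : Matrix n n K} (hAC : Commute A C)
    (hBD : Commute B D) : Commute (A ⊗ₖ B) (C ⊗ₖ D) := by
  rw [commute_iff_eq, ← Matrix.mul_kronecker_mul, ← Matrix.mul_kronecker_mul, hAC.eq, hBD.eq]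

theorem kronecker_pow [DecidableEq m] [DecidableEq n] (A : Matrix m m K) (B : Matrix n n K)
    (i : ℕ) : (A ⊗ₖ B) ^ i = (A ^ i) ⊗ₖ (B ^ i) := by
  induction i with
  | zero => simp
  | succ i ih => simp only [pow_succ, ih, Matrix.mul_kronecker_mul]

end Kronecker

theorem sum_range_add_one_eq_of_eq {M : Type*} [AddCancelCommMonoid M] {F : ℕ → M} {N : ℕ}
    (h : F N = F 0) : ∑ i ∈ range N, F (i + 1) = ∑ i ∈ range N, F i := by
  apply add_right_cancel (b := F 0)
  rw [← sum_range_succ', sum_range_succ, h]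

section GaussTerm

variable {K R : Type*} [Field K] [Ring R] [Algebra K R]

/-- The summand `q ^ (-(2ij + j)) x ^ i y ^ j` of `Υ`, with arbitrary `x` and `y` in place of
`A₀ ⊗ 1` and `1 ⊗ (A₁A₀)⁻¹`. -/
def gaussTerm (q : K) (x y : R) (i j : ℕ) : R :=
  q ^ (-(2 * (i : ℤ) * (j : ℤ) + (j : ℤ))) • (x ^ i * y ^ j)

/-- The unnormalized operator `Υ` built from arbitrary `x` and `y` in place of `A₀ ⊗ 1` and
`1 ⊗ (A₁A₀)⁻¹`. -/
def gaussSum₂ (N : ℕ) (q : K) (x y : R) : R :=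
  ∑ i ∈ range N, ∑ j ∈ range N, gaussTerm q x y i j

variable {q : K} {x y p r : R} {N : ℕ}

theorem gaussTerm_self_left (hq : q ^ N = 1) (hx : x ^ N = 1) (j : ℕ) :
    gaussTerm q x y N j = gaussTerm q x y 0 j := by
  rcases eq_or_ne N 0 with rfl | hN
  · rfl
  have hq0 : q ≠ 0 := (IsUnit.of_pow_eq_one hq hN).ne_zero
  have hexp : -(2 * (N : ℤ) * j + j) = N * (-2 * j) + -(2 * ((0 : ℕ) : ℤ) * j + j) := by
    push_cast; ring
  rw [gaussTerm, gaussTerm, hexp, zpow_add₀ hq0, zpow_mul, zpow_natCast, hq, one_zpow, one_mul,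
    hx, pow_zero]

theorem gaussTerm_self_right (hq : q ^ N = 1) (hy : y ^ N = 1) (i : ℕ) :
    gaussTerm q x y i N = gaussTerm q x y i 0 := by
  have hexp : -(2 * (i : ℤ) * N + N) = N * (-(2 * i + 1)) := by ring
  rw [gaussTerm, gaussTerm, hexp, zpow_mul, zpow_natCast, hq, one_zpow, hy]
  simp

theorem sum_gaussTerm_add_one (hq : q ^ N = 1) (hx : x ^ N = 1) (hy : y ^ N = 1) :
    ∑ i ∈ range N, ∑ j ∈ range N, gaussTerm q x y (i + 1) (j + 1) = gaussSum₂ N q x y := by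
  calc ∑ i ∈ range N, ∑ j ∈ range N, gaussTerm q x y (i + 1) (j + 1)
      = ∑ i ∈ range N, ∑ j ∈ range N, gaussTerm q x y (i + 1) j :=
        sum_congr rfl fun i _ => sum_range_add_one_eq_of_eq (gaussTerm_self_right hq hy (i + 1))
    _ = gaussSum₂ N q x y :=
        sum_range_add_one_eq_of_eq (F := fun i => ∑ j ∈ range N, gaussTerm q x y i j)
          (sum_congr rfl fun j _ => gaussTerm_self_left hq hx j)

theorem mul_gaussTerm (hq0 : q ≠ 0) (hxy : Commute x y) (hxp : QCommute (q ^ 2) x p)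
    (hyp : QCommute (q ^ 2) y p) (hr : x * y * r = q ^ 4 • p) (i j : ℕ) :
    p * gaussTerm q x y i j = q⁻¹ • (gaussTerm q x y (i + 1) (j + 1) * r) := by
  have hmove : x ^ i * y ^ j * p = q ^ (2 * i + 2 * j) • (p * (x ^ i * y ^ j)) := by
    rw [mul_assoc, hyp.pow_left j, mul_smul_comm, ← mul_assoc, hxp.pow_left i, smul_mul_assoc,
      smul_smul, mul_assoc, ← pow_mul, ← pow_mul, ← pow_add, add_comm]
  have hshift : x ^ (i + 1) * y ^ (j + 1) * r = q ^ (2 * i + 2 * j + 4) • (p * (x ^ i * y ^ j)) :=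
    calc x ^ (i + 1) * y ^ (j + 1) * r = x ^ i * (x * y ^ j) * y * r := by
          simp only [pow_succ, mul_assoc]
      _ = x ^ i * y ^ j * (x * y * r) := by rw [(hxy.pow_right j).eq]; simp only [mul_assoc]
      _ = q ^ (2 * i + 2 * j + 4) • (p * (x ^ i * y ^ j)) := by
          rw [hr, mul_smul_comm, hmove, smul_smul, ← pow_add, add_comm]
  rw [gaussTerm, gaussTerm, smul_mul_assoc, hshift, mul_smul_comm, smul_smul, smul_smul,
    ← zpow_natCast, ← zpow_neg_one, ← zpow_add₀ hq0, ← zpow_add₀ hq0]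
  congr 2
  push_cast
  ring

theorem mul_gaussSum₂ (hq0 : q ≠ 0) (hq : q ^ N = 1) (hx : x ^ N = 1) (hy : y ^ N = 1)
    (hxy : Commute x y) (hxp : QCommute (q ^ 2) x p) (hyp : QCommute (q ^ 2) y p)
    (hr : x * y * r = q ^ 4 • p) :
    p * gaussSum₂ N q x y = q⁻¹ • (gaussSum₂ N q x y * r) := by
  calc p * gaussSum₂ N q x y
      = ∑ i ∈ range N, ∑ j ∈ range N, q⁻¹ • (gaussTerm q x y (i + 1) (j + 1) * r) := by
        simp only [gaussSum₂, mul_sum, mul_gaussTerm hq0 hxy hxp hyp hr]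
    _ = q⁻¹ • ((∑ i ∈ range N, ∑ j ∈ range N, gaussTerm q x y (i + 1) (j + 1)) * r) := by
        simp only [sum_mul, smul_sum]
    _ = q⁻¹ • (gaussSum₂ N q x y * r) := by rw [sum_gaussTerm_add_one hq hx hy]

end GaussTerm

theorem kronecker_mul_gaussSum₂ {K n : Type*} [Field K] [Fintype n] [DecidableEq n] {N : ℕ}
    [NeZero N] {q : K} {a b : Matrix n n K} (hab : QCommute (q ^ 2) a b) (hq : q ^ N = 1)
    (ha : a ^ N = 1) (hb : b ^ N = 1) :
    ((b * a) ⊗ₖ b⁻¹) * gaussSum₂ N q (a ⊗ₖ (1 : Matrix n n K)) ((1 : Matrix n n K) ⊗ₖ (b * a)⁻¹) =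
      q⁻¹ • (gaussSum₂ N q (a ⊗ₖ (1 : Matrix n n K)) ((1 : Matrix n n K) ⊗ₖ (b * a)⁻¹) *
        (b ⊗ₖ a)) := by
  have hN : N ≠ 0 := NeZero.ne N
  have hbaN : (b * a)⁻¹ ^ N = 1 := by
    rw [Matrix.inv_pow', hab.mul_pow_eq_one hq ha hb, inv_one]
  lift a to (Matrix n n K)ˣ using IsUnit.of_pow_eq_one ha hN
  lift b to (Matrix n n K)ˣ using IsUnit.of_pow_eq_one hb hN
  rw [← Units.val_mul, ← Matrix.coe_units_inv] at hbaN
  rw [← Units.val_mul, ← Matrix.coe_units_inv, ← Matrix.coe_units_inv]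
  have hxp : QCommute (q ^ 2) ((a : Matrix n n K) ⊗ₖ (1 : Matrix n n K))
      (↑(b * a) ⊗ₖ (↑b⁻¹ : Matrix n n K)) :=
    hab.mul_right_self.kronecker_of_commute_right (Commute.one_left _)
  have hinv : QCommute (q ^ 2) (↑(b * a)⁻¹ : Matrix n n K) ↑b⁻¹ :=
    (hab.mul_left_self.units_inv_left (u := b)).units_inv_left (u := b * a)
  have hyp : QCommute (q ^ 2) ((1 : Matrix n n K) ⊗ₖ (↑(b * a)⁻¹ : Matrix n n K))
      (↑(b * a) ⊗ₖ (↑b⁻¹ : Matrix n n K)) :=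
    hinv.kronecker_of_commute_left (Commute.one_left _)
  refine mul_gaussSum₂ (IsUnit.of_pow_eq_one hq hN).ne_zero hq ?_ ?_
    (commute_kronecker (Commute.one_right _) (Commute.one_left _)) hxp hyp ?_
  · rw [kronecker_pow, ha, one_pow, Matrix.one_kronecker_one]
  · rw [kronecker_pow, hbaN, one_pow, Matrix.one_kronecker_one]
  · rw [← Matrix.mul_kronecker_mul, ← Matrix.mul_kronecker_mul, mul_one, one_mul, hab,
      hab.units_inv_mul_right, Matrix.smul_kronecker, Matrix.kronecker_smul, smul_smul,
      ← pow_add, Units.val_mul]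

theorem pow_val_add_one {C : Type*} [CommMonoid C] {N : ℕ} [NeZero N] {q : C}
    (hq : q ^ N = 1) (k : ZMod N) : q ^ (k + 1).val = q ^ k.val * q := by
  have hone : AddChar.zmodChar N hq 1 = q := by
    simpa using AddChar.zmodChar_apply' hq 1
  simpa only [AddChar.zmodChar_apply, hone] using (AddChar.zmodChar N hq).map_add_eq_mul k 1

section ClockAndShift

variable {N : ℕ} [NeZero N] {q : ℂ}

theorem qCommute_A0_A1 (hq : q ^ N = 1) : QCommute (q ^ 2) (A0 N q) (A1 N) := by
  ext j k
  simp only [A0, A1, Matrix.diagonal_mul, Matrix.smul_apply, Matrix.mul_diagonal, smul_eq_mul]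
  split_ifs with hjk
  · rw [hjk, pow_mul', pow_val_add_one hq]
    ring
  · simp

theorem A0_pow_self (hq : q ^ N = 1) : A0 N q ^ N = 1 := by
  rw [A0, Matrix.diagonal_pow, ← Matrix.diagonal_one]
  congr 1
  ext k
  rw [Pi.pow_apply, pow_right_comm, hq, one_pow]

theorem A1_pow_apply (n : ℕ) (j k : ZMod N) :
    (A1 N ^ n) j k = if j = k + n then 1 else 0 := by
  induction n generalizing j k with
  | zero => simp [Matrix.one_apply]
  | succ n ih =>
    rw [pow_succ, Matrix.mul_apply]
    simp only [ih, A1, mul_ite, mul_one, mul_zero, sum_ite_eq', mem_univ, if_true]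
    rw [Nat.cast_succ, add_assoc, add_comm (1 : ZMod N)]

theorem A1_pow_self : A1 N ^ N = 1 := by
  ext j k
  simp [A1_pow_apply, Matrix.one_apply]

theorem Ups_eq_smul_gaussSum₂ :
    Ups N q = (N : ℂ)⁻¹ • gaussSum₂ N q (A0 N q ⊗ₖ (1 : Matrix (ZMod N) (ZMod N) ℂ))
      ((1 : Matrix (ZMod N) (ZMod N) ℂ) ⊗ₖ (A1 N * A0 N q)⁻¹) := by
  simp only [Ups, gaussSum₂, gaussTerm, kronecker_pow, one_pow,
    ← Matrix.mul_kronecker_mul, one_mul, mul_one]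

theorem Ups_commutation_general (hq : q ^ N = 1) :
    ((A1 N * A0 N q) ⊗ₖ (A1 N)⁻¹) * Ups N q = q⁻¹ • (Ups N q * (A1 N ⊗ₖ A0 N q)) := by
  rw [Ups_eq_smul_gaussSum₂, mul_smul_comm, smul_mul_assoc, smul_comm q⁻¹,
    kronecker_mul_gaussSum₂ (qCommute_A0_A1 hq) hq (A0_pow_self hq) A1_pow_self]

end ClockAndShift

/-- `(A₁A₀ ⊗ A₁⁻¹) ∘ Υ = q⁻¹ · Υ ∘ (A₁ ⊗ A₀)`. -/
theorem Ups_commutation (N : ℕ) [NeZero N] (hN : 3 ≤ N) (hNodd : Odd N)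
    (q : ℂ) (hq : IsPrimitiveRoot q N) :
    ((A1 N * A0 N q) ⊗ₖ (A1 N)⁻¹) * Ups N q =
      q⁻¹ • (Ups N q * (A1 N ⊗ₖ A0 N q)) :=
  Ups_commutation_general hq.pow_eq_one
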